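/- Let K ∈ 𝒦̄_s^d, a > 0 and ε ∈ (0,1]. If Σ_r(K) ≥ a and ϑ_r(K) ≥ ε, then for any e ∈ K with r_e(K) = Σ_r(K) one has U₁(K) ≥ [1 + c∘(a,d)·ε^{(d+1)/2}]·U₁(B(e,a)), where c∘(a,d) can be taken ≥ (1/8)·(3π^{−4})^{d−1}·a^{d−2}·(π/2 − a)^{d−1}. -/

import Mathlib

open Real MeasureTheory Filter
open scoped RealInnerProductSpace ENNReal NNReal Topology

noncomputable section

/-- The ambient Euclidean space `ℝ^{d+1}`. -/
abbrev Esp (d : ℕ) : Type := EuclideanSpace ℝ (Fin (d + 1))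

/-- The unit sphere `S^d ⊂ ℝ^{d+1}`. -/
def uSphere (d : ℕ) : Set (Esp d) := Metric.sphere 0 1

/-- The spherical Lebesgue measure `σ_d` (d-dimensional Hausdorff measure restricted
to the unit sphere). -/
def sigmaMeas (d : ℕ) : Measure (Esp d) := (μH[(d : ℝ)]).restrict (uSphere d)

/-- `ω_{d+1} = σ_d(S^d)`, the total surface area of the unit sphere in `ℝ^{d+1}`. -/
def omegaTot (d : ℕ) : ℝ := (sigmaMeas d (uSphere d)).toReal

/-- `ω_d`, the `(d-1)`-dimensional measure of the unit sphere `S^{d-1} ⊂ ℝ^d`. -/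
def omegaSm (d : ℕ) : ℝ :=
  (μH[((d : ℝ) - 1)] (Metric.sphere (0 : EuclideanSpace ℝ (Fin d)) 1)).toReal

/-- `κ_d`, the volume of the unit ball in `ℝ^d`. -/
def kappaVol (d : ℕ) : ℝ :=
  (volume (Metric.ball (0 : EuclideanSpace ℝ (Fin d)) 1)).toReal

/-- The geodesic (angular) distance `d_s(x,y) = arccos ⟨x,y⟩` on the unit sphere. -/
def geo {d : ℕ} (x y : Esp d) : ℝ := Real.arccos ⟪x, y⟫

/-- The spherical ball (cap) `B(e,α)` of radius `α` centred at `e`. -/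
def cap {d : ℕ} (e : Esp d) (α : ℝ) : Set (Esp d) := {x ∈ uSphere d | geo x e ≤ α}

/-- `K ∈ 𝒦̄_s^d`: a spherically convex body, i.e. the intersection of the unit sphere
with a closed convex cone `C ≠ {0}` which is not a linear subspace. -/
def IsSphConvBody (d : ℕ) (K : Set (Esp d)) : Prop :=
  ∃ C : Set (Esp d), IsClosed C ∧ Convex ℝ C ∧
    (∀ x ∈ C, ∀ t : ℝ, 0 ≤ t → t • x ∈ C) ∧
    C ≠ {0} ∧ (∀ L : Submodule ℝ (Esp d), C ≠ (L : Set (Esp d))) ∧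
    K = C ∩ uSphere d

/-- `K ∈ 𝒦_s^d`: a proper spherically convex body, i.e. the intersection of the unit
sphere with a line-free closed convex cone `C ≠ {0}`. -/
def IsProperSphConvBody (d : ℕ) (K : Set (Esp d)) : Prop :=
  ∃ C : Set (Esp d), IsClosed C ∧ Convex ℝ C ∧
    (∀ x ∈ C, ∀ t : ℝ, 0 ≤ t → t • x ∈ C) ∧
    C ≠ {0} ∧ (∀ x ∈ C, x ≠ 0 → -x ∉ C) ∧
    K = C ∩ uSphere d

/-- The spherical mean width functional
`U₁(K) = (1/(2 ω_{d+1})) σ_d({x ∈ S^d : x^⊥ ∩ K ≠ ∅})`. -/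
def U1 (d : ℕ) (K : Set (Esp d)) : ℝ :=
  (1 / (2 * omegaTot d)) * (sigmaMeas d {x | ∃ y ∈ K, ⟪x, y⟫ = 0}).toReal

/-- `D(x) = ∫₀^x sin^{d-1} t dt`. -/
def Dfun (d : ℕ) (x : ℝ) : ℝ := ∫ t in (0:ℝ)..x, Real.sin t ^ (d - 1)

/-- `S_e = S^d ∩ e^⊥`, the great subsphere orthogonal to `e`. -/
def equator {d : ℕ} (e : Esp d) : Set (Esp d) := uSphere d ∩ {x | ⟪x, e⟫ = 0}

/-- The rotation invariant probability measure `σ⁰_{d-1}` on the great subsphere `S_e`. -/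
def sigma0 (d : ℕ) (e : Esp d) : Measure (Esp d) :=
  (μH[((d : ℝ) - 1)] (equator e))⁻¹ • (μH[((d : ℝ) - 1)]).restrict (equator e)

/-- The spherical radial function `α_{K,e}(u)`: the geodesic distance from `e` to the
boundary of `K` along the great circle through `e` in direction `u ∈ S_e`. -/
def sphRadial {d : ℕ} (K : Set (Esp d)) (e u : Esp d) : ℝ :=
  sSup {t : ℝ | 0 ≤ t ∧ t ≤ π / 2 ∧ (Real.cos t) • e + (Real.sin t) • u ∈ K}

/-- The set `-int(K*)`: points `e` of the sphere such that `K` is contained in the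
open hemisphere centred at `e`. -/
def negIntPolar (d : ℕ) (K : Set (Esp d)) : Set (Esp d) :=
  {e ∈ uSphere d | ∀ x ∈ K, 0 < ⟪e, x⟫}

/-- Points `e` of the sphere such that `K ⊆ {x : ⟨x,e⟩ ≥ 0}` (closed hemisphere). -/
def hemiCenters (d : ℕ) (K : Set (Esp d)) : Set (Esp d) :=
  {e ∈ uSphere d | ∀ x ∈ K, 0 ≤ ⟪x, e⟫}

/-- The `σ⁰_{d-1}`-average of `D ∘ α_{K,e}` over `S_e`. -/
def avgD (d : ℕ) (K : Set (Esp d)) (e : Esp d) : ℝ :=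
  ∫ u, Dfun d (sphRadial K e u) ∂(sigma0 d e)

/-- The `L²(S_e, σ⁰_{d-1})`-deviation of `D ∘ α_{K,e}` from its average. -/
def L2dev (d : ℕ) (K : Set (Esp d)) (e : Esp d) : ℝ :=
  Real.sqrt (∫ u, (Dfun d (sphRadial K e u) - avgD d K e) ^ 2 ∂(sigma0 d e))

/-- `Δ₂(K)`: infimum of the `L²` deviations over `e ∈ -int(K*)`. -/
def Delta2 (d : ℕ) (K : Set (Esp d)) : ℝ :=
  sInf (L2dev d K '' negIntPolar d K)

/-- `Δ₂*(K)`: infimum of the `L²` deviations over all `e` with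
`K ⊆ {x : ⟨x,e⟩ ≥ 0}`. -/
def Delta2Star (d : ℕ) (K : Set (Esp d)) : ℝ :=
  sInf (L2dev d K '' hemiCenters d K)

/-- The centred spherical inradius `r_e(K) = max{r ≥ 0 : B(e,r) ⊆ K}`. -/
def rcent (d : ℕ) (K : Set (Esp d)) (e : Esp d) : ℝ :=
  sSup {r : ℝ | 0 ≤ r ∧ cap e r ⊆ K}

/-- The centred spherical circumradius `R_e(K) = min{r ≥ 0 : K ⊆ B(e,r)}`. -/
def Rcent (d : ℕ) (K : Set (Esp d)) (e : Esp d) : ℝ :=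
  sInf {r : ℝ | 0 ≤ r ∧ K ⊆ cap e r}

/-- The spherical inradius `Σ_r(K) = max{r_e(K) : e ∈ K}`. -/
def SigmaR (d : ℕ) (K : Set (Esp d)) : ℝ :=
  sSup (rcent d K '' K)

/-- The deviation functional `ϑ_r(K) = min{R_e(K) - r_e(K) : e ∈ K, r_e(K) = Σ_r(K)}`. -/
def thetaR (d : ℕ) (K : Set (Esp d)) : ℝ :=
  sInf ((fun e => Rcent d K e - rcent d K e) '' {e ∈ K | rcent d K e = SigmaR d K})

/-- `Ũ_e(K) = σ_d({x ∈ S^d : (x-e)^⊥ ∩ K ≠ ∅})`. -/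
def Utilde (d : ℕ) (e : Esp d) (K : Set (Esp d)) : ℝ :=
  (sigmaMeas d {x | ∃ y ∈ K, ⟪x - e, y⟫ = 0}).toReal

/-- The spherical Hausdorff distance `δ_s`, based on the geodesic metric. -/
def sphHausdorff (d : ℕ) (K L : Set (Esp d)) : ℝ :=
  max (⨆ x ∈ K, ⨅ y ∈ L, geo x y) (⨆ y ∈ L, ⨅ x ∈ K, geo x y)

/-- Continuity of a functional on `𝒦̄_s^d` with respect to the spherical Hausdorff
metric `δ_s`. -/
def SphContinuous (d : ℕ) (F : Set (Esp d) → ℝ) : Prop :=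
  ∀ K, IsSphConvBody d K → ∀ ε > (0:ℝ), ∃ δ > (0:ℝ), ∀ L, IsSphConvBody d L →
    sphHausdorff d K L < δ → |F K - F L| < ε

/-- A hitting functional: continuous, nonnegative, vanishing exactly on one-pointed
sets. -/
def IsHittingFunctional (d : ℕ) (Φ : Set (Esp d) → ℝ) : Prop :=
  SphContinuous d Φ ∧ (∀ K, IsSphConvBody d K → 0 ≤ Φ K) ∧
    (∀ K, IsSphConvBody d K → (Φ K = 0 ↔ ∃ p, K = {p}))

/-- A size functional: continuous, nonnegative, not identically zero, vanishing on
one-pointed sets. -/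
def IsSizeFunctional (d : ℕ) (S : Set (Esp d) → ℝ) : Prop :=
  SphContinuous d S ∧ (∀ K, IsSphConvBody d K → 0 ≤ S K) ∧
    (∃ K, IsSphConvBody d K ∧ S K ≠ 0) ∧
    (∀ p ∈ uSphere d, S ({p} : Set (Esp d)) = 0)

/-- The isoperimetric constant `τ(Φ,Σ,a) = inf{Φ(K) : K ∈ 𝒦̄_s^d, Σ(K) ≥ a}`. -/
def tauConst (d : ℕ) (Φ S : Set (Esp d) → ℝ) (a : ℝ) : ℝ :=
  sInf (Φ '' {K | IsSphConvBody d K ∧ a ≤ S K})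

/-- The spherical convex hull of a set `V ⊆ S^d`: the intersection of the sphere with
the closed convex cone generated by `V`. -/
def sphConvHull (d : ℕ) (V : Set (Esp d)) : Set (Esp d) :=
  {x ∈ uSphere d | ∃ y ∈ convexHull ℝ V, ∃ t : ℝ, 0 < t ∧ x = t • y}

/-- A spherical polytope: the intersection of the sphere with a finitely generated
(polyhedral) cone, which is also a spherically convex body. -/
def IsSphPolytope (d : ℕ) (P : Set (Esp d)) : Prop :=
  IsSphConvBody d P ∧ ∃ V : Finset (Esp d),
    (V : Set (Esp d)) ⊆ uSphere d ∧ P = sphConvHull d (V : Set (Esp d))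

/-- The vertices (extreme points) of a spherical polytope. -/
def sphExtremePoints (d : ℕ) (P : Set (Esp d)) : Set (Esp d) :=
  {x ∈ P | x ∉ sphConvHull d (P \ {x})}

/-- The boundary of `K` relative to the sphere. -/
def sphFrontier (d : ℕ) (K : Set (Esp d)) : Set (Esp d) :=
  {x ∈ K | ∀ ε > (0:ℝ), ∃ y ∈ uSphere d, y ∉ K ∧ dist y x < ε}

/-- The functions `h_m(t) = (-1)^{m+1} e^{-t} + 2 ∑_{i=0}^{⌊m/2⌋} t^{m-2i}/(m-2i)!`. -/
def hFun (m : ℕ) (t : ℝ) : ℝ :=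
  (-1 : ℝ) ^ (m + 1) * Real.exp (-t) +
    2 * ∑ i ∈ Finset.range (m / 2 + 1), t ^ (m - 2 * i) / (Nat.factorial (m - 2 * i) : ℝ)

/-!
If the incentre `e` of `K` has positive inradius, then `K` lies in the closed hemisphere around
`e`: were `⟪x, e⟫ < 0` for some `x ∈ K`, moving the inball of the cone over `K` along `x` would
bring its centre closer to the origin and thus enlarge its angular radius. As `ϑ_r(K) ≥ ε`, some
`x₀ ∈ K` has angle `β ∈ [a + ε, π / 2]` to `e`.

Every hyperplane that meets `B(e, a)` meets `K`, and so does every hyperplane that misses `B(e, a)`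
but separates `x₀` from it. The normals of the latter fill two opposite lenses. In the solid cone
over a lens one finds a box whose two sides in the plane of `e` and `x₀` are of order `1` and
`β - a`, with a `(d - 1)`-dimensional ball of radius of order `√((π / 2 - a) (β - a))` as the third
factor, whereas the cone over the normals of the hyperplanes meeting `B(e, a)` fits in a box of
volume `4 sin a κ_{d-1}`. Comparing cone volumes suffices because the normalized Hausdorff measure
on the sphere and the normalized cone measure are both uniformly distributed, hence equal.
-/

section UniformlyDistributed

variable {X : Type*} [PseudoMetricSpace X] [MeasurableSpace X]

/-- A measure is uniformly distributed on `s` when it is carried by `s` and any two balls of the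
same radius centred in `s` have the same measure. Rotation invariant measures on a sphere are the
example of interest. -/
structure IsUniformlyDistributedOn (μ : Measure X) (s : Set X) : Prop where
  ae_mem : ∀ᵐ x ∂μ, x ∈ s
  measure_ball_eq : ∀ x ∈ s, ∀ y ∈ s, ∀ r, μ (Metric.ball x r) = μ (Metric.ball y r)

namespace IsUniformlyDistributedOn

variable {μ ν : Measure X} {s U : Set X}

lemma setLIntegral_measure_ball (hμ : IsUniformlyDistributedOn μ s)
    (hν : IsUniformlyDistributedOn ν s) {e : X} (he : e ∈ s) (V : Set X) (r : ℝ) :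
    ∫⁻ y in V, μ (Metric.ball y r) ∂ν = μ (Metric.ball e r) * ν V := by
  rw [← setLIntegral_const]
  refine lintegral_congr_ae ?_
  filter_upwards [ae_restrict_of_ae hν.ae_mem] with y hy
  exact hμ.measure_ball_eq y hy e he r

variable [SecondCountableTopology X]

lemma measure_ball_pos (hμ : IsUniformlyDistributedOn μ s) (hμ0 : μ ≠ 0) {x : X} (hx : x ∈ s)
    {r : ℝ} (hr : 0 < r) : 0 < μ (Metric.ball x r) := by
  refine pos_iff_ne_zero.2 fun h0 => hμ0 ?_
  have hs : μ s = 0 := measure_null_of_locally_null s fun y hy =>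
    ⟨Metric.ball y r, mem_nhdsWithin_of_mem_nhds (Metric.ball_mem_nhds y hr),
      (hμ.measure_ball_eq y hy x hx r).trans h0⟩
  rw [← Measure.measure_univ_eq_zero, ← Set.union_compl_self s]
  exact measure_union_null hs (ae_iff.1 hμ.ae_mem)

lemma tendsto_measure_inter_ball_div [IsFiniteMeasure ν] (hν : IsUniformlyDistributedOn ν s)
    (hν0 : ν ≠ 0) {e x : X} (he : e ∈ s) (hx : x ∈ s) (hU : IsOpen U) (hxU : x ∈ U) :
    Tendsto (fun r => ν (U ∩ Metric.ball x r) / ν (Metric.ball e r)) (𝓝[>] 0) (𝓝 1) := by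
  obtain ⟨δ, hδ, hball⟩ := Metric.isOpen_iff.1 hU x hxU
  refine tendsto_const_nhds.congr' ?_
  filter_upwards [Ioo_mem_nhdsGT hδ] with r hr
  rw [Set.inter_eq_right.2 ((Metric.ball_subset_ball hr.2.le).trans hball),
    hν.measure_ball_eq x hx e he r,
    ENNReal.div_self (hν.measure_ball_pos hν0 he hr.1).ne' (measure_ne_top _ _)]

end IsUniformlyDistributedOn

section Fubini

variable [SecondCountableTopology X] [OpensMeasurableSpace X] {U : Set X}

lemma measurableSet_snd_mem_and_dist_lt (hU : MeasurableSet U) (r : ℝ) :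
    MeasurableSet {p : X × X | p.2 ∈ U ∧ dist p.1 p.2 < r} :=
  (measurable_snd hU).inter (isOpen_lt continuous_dist continuous_const).measurableSet

lemma measurable_measure_inter_ball (ν : Measure X) [SFinite ν] (hU : MeasurableSet U) (r : ℝ) :
    Measurable fun x => ν (U ∩ Metric.ball x r) := by
  convert measurable_measure_prodMk_left (ν := ν) (measurableSet_snd_mem_and_dist_lt hU r)
    using 3 with x
  ext y
  simp [dist_comm x y]

lemma lintegral_measure_inter_ball (μ ν : Measure X) [SFinite μ] [SFinite ν]
    (hU : MeasurableSet U) (r : ℝ) :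
    ∫⁻ x, ν (U ∩ Metric.ball x r) ∂μ = ∫⁻ y in U, μ (Metric.ball y r) ∂ν := by
  have hP := measurableSet_snd_mem_and_dist_lt hU r
  have hfst : ∀ x, Prod.mk x ⁻¹' {p : X × X | p.2 ∈ U ∧ dist p.1 p.2 < r} =
      U ∩ Metric.ball x r := fun x => by
    ext y; simp [dist_comm x y]
  have hsnd : ∀ y, μ ((fun x => (x, y)) ⁻¹' {p : X × X | p.2 ∈ U ∧ dist p.1 p.2 < r}) =
      U.indicator (fun y => μ (Metric.ball y r)) y := fun y => by
    by_cases hy : y ∈ U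
    · rw [Set.indicator_of_mem hy]; congr 1; ext x; simp [hy]
    · simp [hy]
  have h := (Measure.prod_apply (μ := μ) (ν := ν) hP).symm.trans (Measure.prod_apply_symm hP)
  simpa only [hfst, hsnd, lintegral_indicator hU] using h

end Fubini

namespace IsUniformlyDistributedOn

variable [SecondCountableTopology X] [OpensMeasurableSpace X] {μ ν : Measure X} {s U : Set X}

lemma measure_ball_mul_measure_univ [SFinite μ] [SFinite ν] (hμ : IsUniformlyDistributedOn μ s)
    (hν : IsUniformlyDistributedOn ν s) {e : X} (he : e ∈ s) (r : ℝ) :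
    μ (Metric.ball e r) * ν Set.univ = ν (Metric.ball e r) * μ Set.univ := by
  rw [← hμ.setLIntegral_measure_ball hν he, ← hν.setLIntegral_measure_ball hμ he,
    ← lintegral_measure_inter_ball μ ν MeasurableSet.univ]
  simp only [Set.univ_inter, Measure.restrict_univ]

lemma lintegral_measure_inter_ball_div [SFinite μ] [IsFiniteMeasure ν]
    (hμ : IsUniformlyDistributedOn μ s) (hν : IsUniformlyDistributedOn ν s) (hν0 : ν ≠ 0)
    {e : X} (he : e ∈ s) (hU : MeasurableSet U) {r : ℝ} (hr : 0 < r) :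
    ∫⁻ x, ν (U ∩ Metric.ball x r) / ν (Metric.ball e r) ∂μ =
      μ Set.univ * ν U / ν Set.univ := by
  have hball : ν (Metric.ball e r) ≠ 0 := (hν.measure_ball_pos hν0 he hr).ne'
  have huniv : ν Set.univ ≠ 0 := by simpa using hν0
  have hratio : μ (Metric.ball e r) / ν (Metric.ball e r) = μ Set.univ / ν Set.univ := by
    rw [ENNReal.div_eq_div_iff huniv (measure_ne_top _ _) hball (measure_ne_top _ _), mul_comm,
      hμ.measure_ball_mul_measure_univ hν he]
  simp only [div_eq_mul_inv] at hratio ⊢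
  rw [lintegral_mul_const _ (measurable_measure_inter_ball ν hU r),
    lintegral_measure_inter_ball μ ν hU, hμ.setLIntegral_measure_ball hν he, mul_right_comm,
    hratio, mul_right_comm]

/-- Christensen's argument: integrate the density ratio `ν (U ∩ B(x, r)) / ν (B(e, r))` over `x`
and let `r → 0`. -/
lemma measure_mul_measure_univ_le [IsFiniteMeasure μ] [IsFiniteMeasure ν]
    (hμ : IsUniformlyDistributedOn μ s) (hν : IsUniformlyDistributedOn ν s) (hU : IsOpen U) :
    μ U * ν Set.univ ≤ μ Set.univ * ν U := by
  rcases eq_or_ne μ 0 with rfl | hμ0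
  · simp
  rcases eq_or_ne ν 0 with rfl | hν0
  · simp
  have : NeZero μ := ⟨hμ0⟩
  obtain ⟨e, he⟩ := hμ.ae_mem.exists
  let r : ℕ → ℝ := fun n => 1 / ((n : ℝ) + 1)
  have hr : ∀ n, 0 < r n := fun n => by positivity
  have hr0 : Tendsto r atTop (𝓝[>] 0) := tendsto_nhdsWithin_iff.2
    ⟨tendsto_one_div_add_atTop_nhds_zero_nat, Eventually.of_forall hr⟩
  let ratio : ℕ → X → ℝ≥0∞ := fun n x => ν (U ∩ Metric.ball x (r n)) / ν (Metric.ball e (r n))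
  have hmeas : ∀ n, Measurable (ratio n) := fun n =>
    (measurable_measure_inter_ball ν hU.measurableSet (r n)).div_const _
  refine ENNReal.mul_le_of_le_div ?_
  calc μ U = ∫⁻ _ in U, 1 ∂μ := (setLIntegral_one U).symm
    _ ≤ ∫⁻ x in U, liminf (fun n => ratio n x) atTop ∂μ := by
        refine lintegral_mono_ae ?_
        filter_upwards [ae_restrict_mem hU.measurableSet, ae_restrict_of_ae hμ.ae_mem]
          with x hxU hxs
        exact ((hν.tendsto_measure_inter_ball_div hν0 he hxs hU hxU).comp hr0).liminf_eq.ge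
    _ ≤ ∫⁻ x, liminf (fun n => ratio n x) atTop ∂μ := setLIntegral_le_lintegral U _
    _ ≤ liminf (fun n => ∫⁻ x, ratio n x ∂μ) atTop := lintegral_liminf_le hmeas
    _ = μ Set.univ * ν U / ν Set.univ := by
        simp only [ratio, hμ.lintegral_measure_inter_ball_div hν hν0 he hU.measurableSet (hr _),
          liminf_const]

theorem measure_univ_smul_eq [IsFiniteMeasure μ] [IsFiniteMeasure ν] [BorelSpace X]
    (hμ : IsUniformlyDistributedOn μ s) (hν : IsUniformlyDistributedOn ν s) :
    ν Set.univ • μ = μ Set.univ • ν := by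
  have := Measure.smul_finite μ (measure_ne_top ν Set.univ)
  refine ext_of_generate_finite {U | IsOpen U} BorelSpace.measurable_eq isPiSystem_isOpen
    (fun U hU => le_antisymm ?_ ?_) (mul_comm _ _)
  · simpa [mul_comm] using hμ.measure_mul_measure_univ_le hν hU
  · simpa [mul_comm] using hν.measure_mul_measure_univ_le hμ hU

end IsUniformlyDistributedOn

end UniformlyDistributed

section SurfaceMeasure

open scoped Pointwise

variable {E : Type*} [NormedAddCommGroup E] [InnerProductSpace ℝ E] [MeasurableSpace E]
  [BorelSpace E]

lemma isUniformlyDistributedOn_sphere {μ : Measure E} {r : ℝ}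
    (hμ : ∀ T : E ≃ₗᵢ[ℝ] E, MeasurePreserving T μ μ)
    (hr : ∀ᵐ x ∂μ, x ∈ Metric.sphere 0 r) :
    IsUniformlyDistributedOn μ (Metric.sphere 0 r) where
  ae_mem := hr
  measure_ball_eq x hx y hy ρ := by
    have hxy : ‖x‖ = ‖y‖ := by
      rw [mem_sphere_zero_iff_norm.1 hx, mem_sphere_zero_iff_norm.1 hy]
    let T : E ≃ₗᵢ[ℝ] E := (ℝ ∙ (x - y))ᗮ.reflection
    have hT : T.symm y = x := T.symm_apply_eq.2 (Submodule.reflection_sub hxy).symm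
    rw [← hT, ← T.preimage_ball,
      (hμ T).measure_preimage Metric.isOpen_ball.measurableSet.nullMeasurableSet]

variable (E) in
/-- The surface measure of the unit sphere, given by the volumes of the truncated cones over its
subsets, viewed as a measure on the ambient space. -/
def surfaceMeasure [FiniteDimensional ℝ E] : Measure E :=
  (volume : Measure E).toSphere.map Subtype.val

variable [FiniteDimensional ℝ E]

instance : IsFiniteMeasure (surfaceMeasure E) := Measure.isFiniteMeasure_map _ _

lemma surfaceMeasure_apply {A : Set E} (hA : MeasurableSet A) :
    surfaceMeasure E A = Module.finrank ℝ E *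
      volume (Set.Ioo (0 : ℝ) 1 • (Metric.sphere 0 1 ∩ A)) := by
  rw [surfaceMeasure, Measure.map_apply measurable_subtype_coe hA,
    Measure.toSphere_apply' _ (measurable_subtype_coe hA), Subtype.image_preimage_coe]

lemma surfaceMeasure_real_of_subset {A : Set E} (hA : MeasurableSet A)
    (hA1 : A ⊆ Metric.sphere 0 1) :
    (surfaceMeasure E).real A =
      Module.finrank ℝ E * volume.real (Set.Ioo (0 : ℝ) 1 • A) := by
  simp [Measure.real, surfaceMeasure_apply hA, Set.inter_eq_right.2 hA1]

lemma ae_surfaceMeasure_mem_sphere : ∀ᵐ x ∂surfaceMeasure E, x ∈ Metric.sphere (0 : E) 1 :=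
  (ae_map_iff measurable_subtype_coe.aemeasurable Metric.isClosed_sphere.measurableSet).2
    (ae_of_all _ Subtype.prop)

lemma measurePreserving_surfaceMeasure (T : E ≃ₗᵢ[ℝ] E) :
    MeasurePreserving T (surfaceMeasure E) (surfaceMeasure E) := by
  refine ⟨T.continuous.measurable, Measure.ext fun A hA => ?_⟩
  have hcone : Set.Ioo (0 : ℝ) 1 • (Metric.sphere 0 1 ∩ T ⁻¹' A) =
      T ⁻¹' (Set.Ioo (0 : ℝ) 1 • (Metric.sphere 0 1 ∩ A)) := by
    ext x
    simp only [Set.mem_smul, Set.mem_preimage, Set.mem_inter_iff, mem_sphere_zero_iff_norm]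
    refine exists_congr fun t => and_congr_right fun _ => T.toEquiv.exists_congr fun y => ?_
    simp [← map_smul]
  rw [Measure.map_apply T.continuous.measurable hA,
    surfaceMeasure_apply (T.continuous.measurable hA), surfaceMeasure_apply hA, hcone]
  congr 1
  exact T.measurePreserving.measure_preimage_equiv (f := T.toMeasurableEquiv) _

instance [Nontrivial E] : NeZero (surfaceMeasure E) :=
  ⟨(Measure.map_ne_zero_iff measurable_subtype_coe.aemeasurable).2 (Measure.toSphere_ne_zero _)⟩

lemma isUniformlyDistributedOn_surfaceMeasure :
    IsUniformlyDistributedOn (surfaceMeasure E) (Metric.sphere 0 1) :=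
  isUniformlyDistributedOn_sphere measurePreserving_surfaceMeasure ae_surfaceMeasure_mem_sphere

end SurfaceMeasure

section SphericalLebesgueMeasure

/-- The points whose orthogonal hyperplane meets `K`. -/
def hittingSet {E : Type*} [NormedAddCommGroup E] [InnerProductSpace ℝ E] (K : Set E) : Set E :=
  {x | ∃ y ∈ K, ⟪x, y⟫ = 0}

variable {d : ℕ}

lemma measurePreserving_sigmaMeas (T : Esp d ≃ₗᵢ[ℝ] Esp d) :
    MeasurePreserving T (sigmaMeas d) (sigmaMeas d) := by
  have hsphere : T.toIsometryEquiv ⁻¹' uSphere d = uSphere d := by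
    ext x; simp [uSphere]
  have h := (T.toIsometryEquiv.measurePreserving_hausdorffMeasure (d : ℝ)).restrict_preimage
    (s := uSphere d) Metric.isClosed_sphere.measurableSet
  rwa [hsphere] at h

lemma isUniformlyDistributedOn_sigmaMeas :
    IsUniformlyDistributedOn (sigmaMeas d) (Metric.sphere 0 1) :=
  isUniformlyDistributedOn_sphere measurePreserving_sigmaMeas
    (ae_restrict_mem Metric.isClosed_sphere.measurableSet)

lemma exists_U1_eq_mul_surfaceMeasure (d : ℕ) : ∃ c : ℝ, 0 ≤ c ∧
    ∀ K, U1 d K = c * (surfaceMeasure (Esp d)).real (hittingSet K) := by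
  by_cases hfin : sigmaMeas d (uSphere d) = ∞
  -- `toReal ∞ = 0` and `1 / 0 = 0` would make `U1` vanish identically.
  · exact ⟨0, le_rfl, fun K => by simp [U1, omegaTot, hfin]⟩
  have : IsFiniteMeasure (sigmaMeas d) :=
    isFiniteMeasure_restrict.2 fun h => hfin (by simpa [sigmaMeas] using h)
  refine ⟨1 / (2 * omegaTot d) *
    ((sigmaMeas d).real Set.univ / (surfaceMeasure (Esp d)).real Set.univ),
    by unfold omegaTot; positivity, fun K => ?_⟩
  have hprop : (surfaceMeasure (Esp d)).real Set.univ * (sigmaMeas d).real (hittingSet K) =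
      (sigmaMeas d).real Set.univ * (surfaceMeasure (Esp d)).real (hittingSet K) := by
    simpa only [measureReal_ennreal_smul_apply, ← measureReal_def] using
      congrArg (·.real (hittingSet K)) (isUniformlyDistributedOn_sigmaMeas.measure_univ_smul_eq
        isUniformlyDistributedOn_surfaceMeasure)
  rw [mul_assoc, div_mul_eq_mul_div ((sigmaMeas d).real _), ← hprop,
    mul_div_cancel_left₀ _ measureReal_univ_ne_zero]
  rfl

end SphericalLebesgueMeasure

section OrthonormalCylinder

variable {E : Type*} [NormedAddCommGroup E] [InnerProductSpace ℝ E] [FiniteDimensional ℝ E]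
  {ι κ : Type*} [Fintype ι] [Fintype κ]

lemma exists_orthonormalBasis_sum_extension {v : ι → E} (hv : Orthonormal ℝ v)
    (hcard : Module.finrank ℝ E = Fintype.card ι + Fintype.card κ) :
    ∃ b : OrthonormalBasis (ι ⊕ κ) ℝ E, ∀ i, b (Sum.inl i) = v i := by
  have hext : Orthonormal ℝ
      ((Set.range Sum.inl).domRestrict (Sum.elim v fun _ : κ => (0 : E))) := by
    convert hv.comp _ (Equiv.ofInjective (Sum.inl : ι → ι ⊕ κ) Sum.inl_injective).symm.injective
    ext ⟨_, i, rfl⟩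
    simp [Set.domRestrict, Equiv.ofInjective_symm_apply]
  obtain ⟨b, hb⟩ := hext.exists_orthonormalBasis_extension_of_card_eq (by simpa using hcard)
  exact ⟨b, fun i => hb _ ⟨i, rfl⟩⟩

lemma exists_norm_eq_one_and_inner_eq_zero {n : ℕ} (hn : Module.finrank ℝ E = n + 2)
    {e : E} (he : ‖e‖ = 1) : ∃ q, ‖q‖ = 1 ∧ ⟪e, q⟫ = 0 := by
  have hv : Orthonormal ℝ ![e] := by simp [he]
  obtain ⟨b, hb⟩ := exists_orthonormalBasis_sum_extension (κ := Fin (n + 1)) hv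
    (by simp [hn]; ring)
  refine ⟨b (Sum.inr 0), b.orthonormal.1 _, ?_⟩
  have h : ⟪b (Sum.inl 0), b (Sum.inr 0)⟫ = 0 := b.orthonormal.2 Sum.inl_ne_inr
  rwa [hb] at h

variable [MeasurableSpace E] [BorelSpace E]

lemma measurePreserving_repr_sum (b : OrthonormalBasis (ι ⊕ κ) ℝ E) :
    MeasurePreserving fun x => ((fun i => b.repr x (Sum.inl i)),
      WithLp.toLp 2 fun j => b.repr x (Sum.inr j)) :=
  ((MeasurePreserving.id volume).prod (PiLp.volume_preserving_toLp κ)).comp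
    ((volume_measurePreserving_sumPiEquivProdPi fun _ : ι ⊕ κ => ℝ).comp
      ((PiLp.volume_preserving_ofLp (ι ⊕ κ)).comp b.measurePreserving_repr))

lemma volume_orthonormal_cylinder {v : ι → E} (hv : Orthonormal ℝ v) {n : ℕ}
    (hn : Module.finrank ℝ E = Fintype.card ι + n) {I : ι → Set ℝ}
    (hI : ∀ i, MeasurableSet (I i)) {r : ℝ} (hr : 0 ≤ r) :
    volume {x : E | (∀ i, ⟪v i, x⟫ ∈ I i) ∧ ‖x‖ ^ 2 - ∑ i, ⟪v i, x⟫ ^ 2 ≤ r ^ 2} =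
      (∏ i, volume (I i)) * volume (Metric.closedBall (0 : EuclideanSpace ℝ (Fin n)) r) := by
  obtain ⟨b, hb⟩ := exists_orthonormalBasis_sum_extension (κ := Fin n) hv (by simpa using hn)
  rw [← volume_pi_pi, ← Measure.prod_prod, ← Measure.volume_eq_prod,
    ← (measurePreserving_repr_sum b).measure_preimage
      ((MeasurableSet.univ_pi hI).prod Metric.isClosed_closedBall.measurableSet).nullMeasurableSet]
  congr 1
  ext x
  have hv_repr : ∀ i, ⟪v i, x⟫ = b.repr x (Sum.inl i) := fun i => by
    rw [b.repr_apply_apply, hb]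
  have hnorm : ‖x‖ ^ 2 = ∑ i, b.repr x (Sum.inl i) ^ 2 + ∑ j, b.repr x (Sum.inr j) ^ 2 := by
    rw [← b.repr.norm_map x, EuclideanSpace.real_norm_sq_eq, Fintype.sum_sum_type]
  have hrest : ‖WithLp.toLp 2 fun j => b.repr x (Sum.inr j)‖ ^ 2 =
      ‖x‖ ^ 2 - ∑ i, ⟪v i, x⟫ ^ 2 := by
    rw [EuclideanSpace.real_norm_sq_eq, hnorm]
    simp only [hv_repr, add_sub_cancel_left]
  rw [Set.mem_ofPred_eq, ← hrest, sq_le_sq₀ (norm_nonneg _) hr]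
  simp only [Set.mem_preimage, Set.mem_prod, Set.mem_univ_pi, mem_closedBall_zero_iff, hv_repr]

lemma volume_real_closedBall_eq_mul_kappaVol (n : ℕ) {r : ℝ} (hr : 0 ≤ r) :
    volume.real (Metric.closedBall (0 : EuclideanSpace ℝ (Fin n)) r) = r ^ n * kappaVol n := by
  rw [Measure.addHaar_real_closedBall _ _ hr, finrank_euclideanSpace_fin]
  rfl

lemma volume_real_box {n : ℕ} (hn : Module.finrank ℝ E = n + 2) {p q : E} (hp : ‖p‖ = 1)
    (hq : ‖q‖ = 1) (hpq : ⟪p, q⟫ = 0) {s₀ s₁ t₀ t₁ r : ℝ} (hs : s₀ ≤ s₁) (ht : t₀ ≤ t₁)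
    (hr : 0 ≤ r) :
    volume.real {x : E | ⟪p, x⟫ ∈ Set.Icc s₀ s₁ ∧ ⟪q, x⟫ ∈ Set.Icc t₀ t₁ ∧
      ‖x‖ ^ 2 - ⟪p, x⟫ ^ 2 - ⟪q, x⟫ ^ 2 ≤ r ^ 2} =
    (s₁ - s₀) * (t₁ - t₀) * (r ^ n * kappaVol n) := by
  have hv : Orthonormal ℝ ![p, q] := by
    simp [orthonormal_vecCons_iff, hp, hq, hpq]
  have h := volume_orthonormal_cylinder hv (n := n) (by simp [hn, add_comm])
    (I := ![Set.Icc s₀ s₁, Set.Icc t₀ t₁]) (by simp [Fin.forall_fin_two]) hr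
  simp only [Fin.forall_fin_two, Fin.sum_univ_two, Fin.prod_univ_two, Matrix.cons_val_zero,
    Matrix.cons_val_one, and_assoc, ← sub_sub] at h
  rw [Measure.real, h, ENNReal.toReal_mul, ENNReal.toReal_mul, ← Measure.real, ← Measure.real,
    ← Measure.real, Real.volume_real_Icc_of_le hs, Real.volume_real_Icc_of_le ht,
    volume_real_closedBall_eq_mul_kappaVol n hr]

end OrthonormalCylinder

section SphericalCap

variable {d : ℕ} {e x : Esp d} {s : ℝ}

lemma mem_uSphere_iff_norm_eq_one : x ∈ uSphere d ↔ ‖x‖ = 1 := mem_sphere_zero_iff_norm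

lemma cos_geo (hx : ‖x‖ = 1) (he : ‖e‖ = 1) : Real.cos (geo x e) = ⟪x, e⟫ :=
  have h := real_inner_mem_Icc_of_norm_eq_one hx he
  Real.cos_arccos h.1 h.2

lemma mem_cap_iff_cos_le_inner (he : ‖e‖ = 1) (hs : s ∈ Set.Icc 0 π) :
    x ∈ cap e s ↔ ‖x‖ = 1 ∧ Real.cos s ≤ ⟪x, e⟫ := by
  rw [cap, Set.mem_sep_iff, mem_uSphere_iff_norm_eq_one]
  refine and_congr_right fun hx => ?_
  rw [← cos_geo hx he]
  exact (Real.strictAntiOn_cos.le_iff_ge hs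
    ⟨Real.arccos_nonneg ⟪x, e⟫, Real.arccos_le_pi ⟪x, e⟫⟩).symm

end SphericalCap

section UnitVectors

variable {E : Type*} [NormedAddCommGroup E] [InnerProductSpace ℝ E] {x y : E}

lemma norm_sub_inner_smul_sq (hx : ‖x‖ = 1) (hy : ‖y‖ = 1) :
    ‖y - ⟪x, y⟫ • x‖ ^ 2 = 1 - ⟪x, y⟫ ^ 2 := by
  rw [norm_sub_sq_real, norm_smul, real_inner_smul_right, hx, hy, real_inner_comm,
    Real.norm_eq_abs, mul_one, sq_abs]
  ring

lemma exists_norm_eq_one_and_eq_inner_smul_add (hx : ‖x‖ = 1) (hy : ‖y‖ = 1)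
    (hxy : ⟪x, y⟫ ^ 2 < 1) :
    ∃ u, ‖u‖ = 1 ∧ ⟪x, u⟫ = 0 ∧ y = ⟪x, y⟫ • x + √(1 - ⟪x, y⟫ ^ 2) • u := by
  have hnorm : ‖y - ⟪x, y⟫ • x‖ = √(1 - ⟪x, y⟫ ^ 2) := by
    rw [← norm_sub_inner_smul_sq hx hy, Real.sqrt_sq (norm_nonneg _)]
  have hpos : 0 < √(1 - ⟪x, y⟫ ^ 2) := Real.sqrt_pos.2 (by linarith)
  rw [← hnorm] at hpos
  refine ⟨‖y - ⟪x, y⟫ • x‖⁻¹ • (y - ⟪x, y⟫ • x), norm_smul_inv_norm (norm_pos_iff.1 hpos), ?_, ?_⟩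
  · rw [real_inner_smul_right, inner_sub_right, real_inner_smul_right, real_inner_self_eq_norm_sq,
      hx]
    ring
  · rw [← hnorm, smul_inv_smul₀ hpos.ne', add_sub_cancel]

lemma inner_sq_add_inner_sq_le {z : E} (hx : ‖x‖ = 1) (hy : ‖y‖ = 1) (hxy : ⟪x, y⟫ = 0) :
    ⟪x, z⟫ ^ 2 + ⟪y, z⟫ ^ 2 ≤ ‖z‖ ^ 2 := by
  have hv : Orthonormal ℝ ![x, y] := by
    simp [orthonormal_vecCons_iff, hx, hy, hxy]
  simpa [Fin.sum_univ_two] using hv.sum_inner_products_le (s := Finset.univ) (x := z)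

end UnitVectors

section ConvexCone

variable {E : Type*} [NormedAddCommGroup E] [NormedSpace ℝ E] {C : ProperCone ℝ E} {x z : E}
  {ρ t : ℝ}

lemma smul_mem_properCone_iff (ht : 0 < t) : t • x ∈ C ↔ x ∈ C :=
  ⟨fun h => by simpa [smul_smul, ht.ne'] using C.smul_mem h (inv_pos.2 ht).le,
    fun h => C.smul_mem h ht.le⟩

lemma closedBall_add_smul_subset (ht : 0 ≤ t) (hx : x ∈ C) (h : Metric.closedBall z ρ ⊆ C) :
    Metric.closedBall (z + t • x) ρ ⊆ C := by
  intro y hy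
  have hshift : y - t • x ∈ C :=
    h (by simpa [mem_closedBall_iff_norm, sub_sub, add_comm] using hy)
  simpa using C.add_mem hshift (C.smul_mem hx ht)

lemma closedBall_inv_norm_smul_subset (hz : z ≠ 0) (h : Metric.closedBall z ρ ⊆ C) :
    Metric.closedBall (‖z‖⁻¹ • z) (ρ / ‖z‖) ⊆ C := by
  have hz' : 0 < ‖z‖ := norm_pos_iff.2 hz
  intro y hy
  refine (smul_mem_properCone_iff hz').1 (h ?_)
  have hdist : ‖z‖ • y - z = ‖z‖ • (y - ‖z‖⁻¹ • z) := by
    rw [smul_sub, smul_inv_smul₀ hz'.ne']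
  rw [mem_closedBall_iff_norm] at hy ⊢
  rwa [hdist, norm_smul, norm_norm, ← le_div_iff₀' hz']

lemma radius_le_norm_of_closedBall_subset (hC : C ≠ ⊤) (h : Metric.closedBall z ρ ⊆ C) :
    ρ ≤ ‖z‖ := by
  contrapose! hC
  have hzero : (C : Set E) ∈ 𝓝 0 :=
    mem_of_superset (Metric.closedBall_mem_nhds_of_mem (by simpa using hC)) h
  refine SetLike.ext fun x => iff_of_true ?_ trivial
  have hlim : Tendsto (fun t : ℝ => t • x) (𝓝[>] 0) (𝓝 0) :=
    ((tendsto_id.smul_const x).mono_left nhdsWithin_le_nhds).trans (by simp)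
  obtain ⟨t, htx, ht⟩ := ((hlim.eventually hzero).and self_mem_nhdsWithin).exists
  exact (smul_mem_properCone_iff ht).1 htx

end ConvexCone

section CentredInradius

variable {d : ℕ} {C : ProperCone ℝ (Esp d)} {e x : Esp d} {ρ s : ℝ}

lemma IsSphConvBody.exists_properCone {K : Set (Esp d)} (hK : IsSphConvBody d K)
    (hne : K.Nonempty) : ∃ C : ProperCone ℝ (Esp d), C ≠ ⊤ ∧ K = (C : Set (Esp d)) ∩ uSphere d := by
  obtain ⟨C, hclosed, hconv, hcone, -, hsub, rfl⟩ := hK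
  obtain ⟨x, hx, -⟩ := hne
  refine ⟨{ carrier := C, add_mem' := fun {y z} hy hz => ?_,
            zero_mem' := by simpa using hcone x hx 0 le_rfl,
            smul_mem' := fun t y hy => hcone y hy t t.2,
            isClosed' := hclosed }, fun htop => hsub ⊤ (congrArg SetLike.coe htop), rfl⟩
  have hmid := hconv hy hz (a := 1 / 2) (b := 1 / 2) (by norm_num) (by norm_num) (by norm_num)
  simpa [smul_smul] using hcone _ hmid 2 (by norm_num)

lemma closedBall_sin_subset_of_cap_subset (he : ‖e‖ = 1) (hs : s ∈ Set.Icc 0 (π / 2))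
    (h : cap e s ⊆ C) : Metric.closedBall e (Real.sin s) ⊆ C := by
  intro z hz
  rcases eq_or_ne z 0 with rfl | hz0
  · exact C.zero_mem
  have hz' : 0 < ‖z‖ := norm_pos_iff.2 hz0
  have hinner : ‖z‖ ^ 2 + Real.cos s ^ 2 ≤ 2 * ⟪z, e⟫ := by
    have hdist : ‖z - e‖ ^ 2 ≤ Real.sin s ^ 2 := by
      gcongr; exact mem_closedBall_iff_norm.1 hz
    rw [norm_sub_sq_real, he] at hdist
    linarith [Real.sin_sq_add_cos_sq s]
  refine (smul_mem_properCone_iff (inv_pos.2 hz')).1 (h ?_)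
  refine (mem_cap_iff_cos_le_inner he ⟨hs.1, by linarith [hs.2, Real.pi_pos]⟩).2
    ⟨norm_smul_inv_norm hz0, ?_⟩
  rw [real_inner_smul_left, inv_mul_eq_div, le_div_iff₀ hz']
  linarith [two_mul_le_add_sq ‖z‖ (Real.cos s)]

lemma cap_subset_of_closedBall_sin_subset (he : ‖e‖ = 1) (hs : s ∈ Set.Ico 0 (π / 2))
    (h : Metric.closedBall e (Real.sin s) ⊆ C) : cap e s ⊆ C := by
  intro x hx
  obtain ⟨hx1, hinner⟩ :=
    (mem_cap_iff_cos_le_inner he ⟨hs.1, by linarith [hs.2, Real.pi_pos]⟩).1 hx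
  have hcos : 0 < Real.cos s := Real.cos_pos_of_mem_Ioo ⟨by linarith [hs.1, Real.pi_pos], hs.2⟩
  have hsin : 0 ≤ Real.sin s :=
    Real.sin_nonneg_of_nonneg_of_le_pi hs.1 (by linarith [hs.2, Real.pi_pos])
  refine (smul_mem_properCone_iff (hcos.trans_le hinner)).1 (h ?_)
  rw [mem_closedBall_iff_norm]
  refine le_of_sq_le_sq ?_ hsin
  rw [norm_sub_sq_real, norm_smul, real_inner_smul_left, hx1, he, mul_one, Real.norm_eq_abs, sq_abs]
  nlinarith [Real.sin_sq_add_cos_sq s]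

lemma rcent_nonneg {K : Set (Esp d)} : 0 ≤ rcent d K e := Real.sSup_nonneg fun _ hr => hr.1

lemma closedBall_sin_subset_of_le_rcent (he : ‖e‖ = 1) (hs : s ∈ Set.Ioc 0 (π / 2))
    (h : s ≤ rcent d (C ∩ uSphere d) e) : Metric.closedBall e (Real.sin s) ⊆ C := by
  have hsin : 0 < Real.sin s :=
    Real.sin_pos_of_pos_of_lt_pi hs.1 (by linarith [hs.2, Real.pi_pos])
  rw [← closure_ball e hsin.ne']
  refine closure_minimal (fun z hz => ?_) C.isClosed
  set t := Real.arcsin (dist z e)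
  have ht0 : 0 ≤ t := Real.arcsin_nonneg.2 dist_nonneg
  have hts : t < s := (Real.arcsin_lt_iff_lt_sin' ⟨by linarith [hs.1, Real.pi_pos], hs.2⟩).2 hz
  obtain ⟨r, hr, htr⟩ := exists_lt_of_lt_csSup
    (Set.nonempty_iff_ne_empty.2 fun hempty => by
      rw [rcent, hempty, Real.sSup_empty] at h; linarith [hs.1]) (hts.trans_le h)
  refine closedBall_sin_subset_of_cap_subset he ⟨ht0, hts.le.trans hs.2⟩
    (fun x hx => (hr.2 ⟨hx.1, hx.2.trans htr.le⟩).1) ?_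
  have hdist : Real.sin t = dist z e :=
    Real.sin_arcsin (by linarith [dist_nonneg (x := z) (y := e)])
      ((Metric.mem_ball.1 hz).le.trans (Real.sin_le_one s))
  exact Metric.mem_closedBall.2 hdist.ge

lemma cap_subset_of_le_rcent (he : ‖e‖ = 1) (hs : s ∈ Set.Ioo 0 (π / 2))
    (h : s ≤ rcent d (C ∩ uSphere d) e) : cap e s ⊆ C ∩ uSphere d :=
  Set.subset_inter (cap_subset_of_closedBall_sin_subset he ⟨hs.1.le, hs.2⟩
    (closedBall_sin_subset_of_le_rcent he ⟨hs.1, hs.2.le⟩ h)) fun _ hx => hx.1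

lemma le_pi_of_cap_subset (hC : C ≠ ⊤) (h : cap e s ⊆ C) : s ≤ π := by
  contrapose! hC
  refine SetLike.ext fun x => iff_of_true ?_ trivial
  rcases eq_or_ne x 0 with rfl | hx
  · exact C.zero_mem
  exact (smul_mem_properCone_iff (inv_pos.2 (norm_pos_iff.2 hx))).1
    (h ⟨mem_uSphere_iff_norm_eq_one.2 (norm_smul_inv_norm hx), (Real.arccos_le_pi _).trans hC.le⟩)

lemma rcent_le_pi (hC : C ≠ ⊤) : rcent d (C ∩ uSphere d) e ≤ π :=
  Real.sSup_le (fun _ hr => le_pi_of_cap_subset hC fun _ hx => (hr.2 hx).1) Real.pi_pos.le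

lemma rcent_le_SigmaR (hC : C ≠ ⊤) (he : e ∈ (C : Set (Esp d)) ∩ uSphere d) :
    rcent d (C ∩ uSphere d) e ≤ SigmaR d (C ∩ uSphere d) :=
  le_csSup ⟨π, Set.forall_mem_image.2 fun _ _ => rcent_le_pi hC⟩ (Set.mem_image_of_mem _ he)

lemma arcsin_le_rcent (hC : C ≠ ⊤) (he : ‖e‖ = 1) (h : Metric.closedBall e ρ ⊆ C) :
    Real.arcsin ρ ≤ rcent d (C ∩ uSphere d) e := by
  refine le_of_forall_lt_imp_le_of_dense fun s hs => ?_
  rcases lt_or_ge s 0 with hs0 | hs0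
  · exact hs0.le.trans rcent_nonneg
  have hs2 : s < π / 2 := hs.trans_le (Real.arcsin_le_pi_div_two ρ)
  have hsin : Real.sin s ≤ ρ :=
    (Real.lt_arcsin_iff_sin_lt' ⟨by linarith [Real.pi_pos], hs2⟩).1 hs |>.le
  refine le_csSup ⟨π, fun r hr => le_pi_of_cap_subset hC fun _ hx => (hr.2 hx).1⟩
    ⟨hs0, Set.subset_inter (cap_subset_of_closedBall_sin_subset he ⟨hs0, hs2⟩
      ((Metric.closedBall_subset_closedBall hsin).trans h)) fun _ hx => hx.1⟩

lemma exists_rcent_lt_of_inner_neg (hC : C ≠ ⊤) (he : e ∈ (C : Set (Esp d)) ∩ uSphere d)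
    (hr : 0 < rcent d (C ∩ uSphere d) e) (hx : x ∈ (C : Set (Esp d)) ∩ uSphere d)
    (hneg : ⟪x, e⟫ < 0) : ∃ y ∈ (C : Set (Esp d)) ∩ uSphere d,
      rcent d (C ∩ uSphere d) e < rcent d (C ∩ uSphere d) y := by
  have he1 := mem_uSphere_iff_norm_eq_one.1 he.2
  have hx1 := mem_uSphere_iff_norm_eq_one.1 hx.2
  set s := min (rcent d (C ∩ uSphere d) e) (π / 2)
  have hs : s ∈ Set.Ioc 0 (π / 2) := ⟨lt_min hr (by positivity), min_le_right _ _⟩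
  have hsin : 0 < Real.sin s :=
    Real.sin_pos_of_pos_of_lt_pi hs.1 (by linarith [hs.2, Real.pi_pos])
  -- Translating along `x` keeps the ball in the cone while moving its centre closer to `0`.
  set z := e - ⟪x, e⟫ • x with hz
  have hball : Metric.closedBall z (Real.sin s) ⊆ C := by
    rw [hz, sub_eq_add_neg, ← neg_smul]
    exact closedBall_add_smul_subset (neg_nonneg.2 hneg.le) hx.1
      (closedBall_sin_subset_of_le_rcent he1 hs (min_le_left _ _))
  have hsin_le := radius_le_norm_of_closedBall_subset hC hball
  have hz0 : 0 < ‖z‖ := hsin.trans_le hsin_le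
  have hz1 : ‖z‖ < 1 := by
    refine (sq_lt_one_iff₀ hz0.le).1 ?_
    rw [hz, norm_sub_inner_smul_sq hx1 he1]
    linarith [sq_pos_of_neg hneg]
  have hs2 : s < π / 2 := hs.2.lt_of_ne fun h => by
    rw [h, Real.sin_pi_div_two] at hsin_le
    linarith
  have hy1 : ‖‖z‖⁻¹ • z‖ = 1 := norm_smul_inv_norm (norm_pos_iff.1 hz0)
  refine ⟨‖z‖⁻¹ • z, ⟨C.smul_mem (hball (Metric.mem_closedBall_self hsin.le))
    (inv_nonneg.2 hz0.le), mem_uSphere_iff_norm_eq_one.2 hy1⟩, ?_⟩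
  calc rcent d (C ∩ uSphere d) e = s :=
        ((min_choice _ _).resolve_right hs2.ne).symm
    _ < Real.arcsin (Real.sin s / ‖z‖) := by
        rw [Real.lt_arcsin_iff_sin_lt' ⟨by linarith [hs.1], hs2⟩]
        exact (lt_div_iff₀ hz0).2 (mul_lt_of_lt_one_right hsin hz1)
    _ ≤ _ := arcsin_le_rcent hC hy1 (closedBall_inv_norm_smul_subset (norm_pos_iff.1 hz0) hball)

lemma inner_nonneg_of_rcent_eq_SigmaR (hC : C ≠ ⊤) (he : e ∈ (C : Set (Esp d)) ∩ uSphere d)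
    (hr : 0 < rcent d (C ∩ uSphere d) e)
    (hmax : rcent d (C ∩ uSphere d) e = SigmaR d (C ∩ uSphere d))
    (hx : x ∈ (C : Set (Esp d)) ∩ uSphere d) : 0 ≤ ⟪x, e⟫ := by
  by_contra! hneg
  obtain ⟨y, hy, hlt⟩ := exists_rcent_lt_of_inner_neg hC he hr hx hneg
  exact (hmax ▸ hlt).not_ge (rcent_le_SigmaR hC hy)

lemma exists_Rcent_le_geo {K : Set (Esp d)} (hK : IsCompact K) (hKS : K ⊆ uSphere d)
    (hne : K.Nonempty) : ∃ x ∈ K, Rcent d K e ≤ geo x e := by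
  obtain ⟨x, hx, hmax⟩ := hK.exists_isMaxOn hne (f := fun x => geo x e)
    (Continuous.continuousOn (by unfold geo; fun_prop))
  exact ⟨x, hx, csInf_le ⟨0, fun r hr => hr.1⟩
    ⟨Real.arccos_nonneg _, fun y hy => ⟨hKS hy, hmax hy⟩⟩⟩

lemma thetaR_le (hC : C ≠ ⊤) (he : e ∈ (C : Set (Esp d)) ∩ uSphere d)
    (hmax : rcent d (C ∩ uSphere d) e = SigmaR d (C ∩ uSphere d)) :
    thetaR d (C ∩ uSphere d) ≤ Rcent d (C ∩ uSphere d) e - rcent d (C ∩ uSphere d) e := by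
  refine csInf_le ⟨-π, Set.forall_mem_image.2 fun y _ => ?_⟩ (Set.mem_image_of_mem _ ⟨he, hmax⟩)
  have hR : 0 ≤ Rcent d (C ∩ uSphere d) y := Real.sInf_nonneg fun r hr => hr.1
  linarith [rcent_le_pi hC (e := y)]

lemma exists_rcent_add_thetaR_le_geo (hC : C ≠ ⊤) (he : e ∈ (C : Set (Esp d)) ∩ uSphere d)
    (hr : 0 < rcent d (C ∩ uSphere d) e)
    (hmax : rcent d (C ∩ uSphere d) e = SigmaR d (C ∩ uSphere d)) :
    ∃ x ∈ (C : Set (Esp d)) ∩ uSphere d,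
      rcent d (C ∩ uSphere d) e + thetaR d (C ∩ uSphere d) ≤ geo x e ∧ geo x e ≤ π / 2 := by
  obtain ⟨x, hx, hRx⟩ := exists_Rcent_le_geo (e := e) (K := C ∩ uSphere d)
    ((isCompact_sphere _ _).inter_left C.isClosed) Set.inter_subset_right ⟨e, he⟩
  exact ⟨x, hx, by linarith [thetaR_le hC he hmax],
    Real.arccos_le_pi_div_two.2 (inner_nonneg_of_rcent_eq_SigmaR hC he hr hmax hx)⟩

end CentredInradius

section LensEstimate

variable {a β : ℝ}

lemma sub_mul_cos_midpoint_le_sin_sub_sin (ha : 0 ≤ a) (haβ : a ≤ β) (hβ : β ≤ π / 2) :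
    2 / π * (β - a) * Real.cos ((β + a) / 2) ≤ Real.sin β - Real.sin a := by
  have hcos : 0 ≤ Real.cos ((β + a) / 2) :=
    Real.cos_nonneg_of_mem_Icc ⟨by linarith [Real.pi_pos], by linarith⟩
  have hsin : 2 / π * ((β - a) / 2) ≤ Real.sin ((β - a) / 2) :=
    Real.mul_le_sin (by linarith) (by linarith)
  rw [Real.sin_sub_sin]
  calc 2 / π * (β - a) * Real.cos ((β + a) / 2)
      = 2 * (2 / π * ((β - a) / 2)) * Real.cos ((β + a) / 2) := by ring
    _ ≤ _ := by gcongr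

lemma sub_mul_cos_le_sin_sub_sin (ha : 0 ≤ a) (haβ : a ≤ β) (hβ : β ≤ π / 2) :
    2 / π * (β - a) * Real.cos β ≤ Real.sin β - Real.sin a := by
  refine le_trans ?_ (sub_mul_cos_midpoint_le_sin_sub_sin ha haβ hβ)
  gcongr
  exact Real.cos_le_cos_of_nonneg_of_le_pi (by linarith) (by linarith [Real.pi_pos]) (by linarith)

lemma pi_div_two_sub_mul_sub_le_sin_sub_sin (ha : 0 ≤ a) (haβ : a ≤ β) (hβ : β ≤ π / 2) :
    2 / π ^ 2 * ((π / 2 - a) * (β - a)) ≤ Real.sin β - Real.sin a := by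
  refine le_trans ?_ (sub_mul_cos_midpoint_le_sin_sub_sin ha haβ hβ)
  have hcos : 2 / π * ((π / 2 - a) / 2) ≤ Real.cos ((β + a) / 2) := by
    rw [← Real.sin_pi_div_two_sub]
    exact le_trans (by gcongr; linarith) (Real.mul_le_sin (by linarith) (by linarith))
  calc 2 / π ^ 2 * ((π / 2 - a) * (β - a))
      = 2 / π * (β - a) * (2 / π * ((π / 2 - a) / 2)) := by field_simp
    _ ≤ _ := by gcongr

lemma sq_sqrt_pi_div_two_sub_mul_div (haβ : a ≤ β) (hβ : β ≤ π / 2) :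
    (√((π / 2 - a) * (β - a)) / (2 * π)) ^ 2 = (π / 2 - a) * (β - a) / (2 * π) ^ 2 := by
  rw [div_pow, Real.sq_sqrt (mul_nonneg (by linarith) (by linarith))]

variable {ρ η N : ℝ}

lemma lt_one_of_sq_sub_sq_sub_sq_le (ha : 0 ≤ a) (haβ : a < β) (hβ : β ≤ π / 2)
    (hρ : ρ ∈ Set.Icc (1 / 2) (9 / 10)) (hη : η ∈ Set.Icc 0 ((β - a) / 8)) (hN : 0 ≤ N)
    (h : N ^ 2 - ρ ^ 2 - η ^ 2 ≤ (√((π / 2 - a) * (β - a)) / (2 * π)) ^ 2) : N < 1 := by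
  have hπ := Real.pi_lt_d2
  rw [sq_sqrt_pi_div_two_sub_mul_div haβ.le hβ] at h
  have hρ2 : ρ ^ 2 ≤ (9 / 10) ^ 2 := by gcongr; exacts [by linarith [hρ.1], hρ.2]
  have hη2 : η ^ 2 ≤ (1 / 5) ^ 2 := by gcongr; exacts [hη.1, by linarith [hη.2]]
  have hr2 : (π / 2 - a) * (β - a) / (2 * π) ^ 2 ≤ 1 / 16 := by
    rw [div_le_iff₀ (by positivity)]
    calc (π / 2 - a) * (β - a) ≤ π / 2 * (π / 2) := by gcongr <;> linarith
      _ = 1 / 16 * (2 * π) ^ 2 := by ring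
  exact (sq_lt_one_iff₀ hN).1 (by linarith)

lemma sin_mul_lt_of_sq_sub_sq_sub_sq_le (ha : 0 ≤ a) (haβ : a < β) (hβ : β ≤ π / 2)
    (hρ : 1 / 2 ≤ ρ) (hη : η ∈ Set.Icc 0 ((β - a) / 8))
    (h : N ^ 2 - ρ ^ 2 - η ^ 2 ≤ (√((π / 2 - a) * (β - a)) / (2 * π)) ^ 2) :
    Real.sin a * N < ρ * Real.sin β - η * Real.cos β := by
  have hπ := Real.pi_lt_d2
  rw [sq_sqrt_pi_div_two_sub_mul_div haβ.le hβ] at h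
  set G := Real.sin β - Real.sin a with hG
  have hGpos : 0 < G := sub_pos.2 (Real.sin_lt_sin_of_lt_of_le_pi_div_two (by linarith) hβ haβ)
  have hqδ : (π / 2 - a) * (β - a) ≤ π ^ 2 / 2 * G := by
    have := pi_div_two_sub_mul_sub_le_sin_sub_sin ha haβ.le hβ
    calc (π / 2 - a) * (β - a) = π ^ 2 / 2 * (2 / π ^ 2 * ((π / 2 - a) * (β - a))) := by field_simp
      _ ≤ _ := by gcongr
  have hr2 : (π / 2 - a) * (β - a) / (2 * π) ^ 2 ≤ G / 8 := by
    rw [div_le_iff₀ (by positivity)]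
    linarith
  have hη2 : η ^ 2 ≤ G / 10 := by
    calc η ^ 2 ≤ ((β - a) / 8) ^ 2 := by gcongr; exacts [hη.1, hη.2]
      _ = (β - a) * (β - a) / 64 := by ring
      _ ≤ (π / 2 - a) * (β - a) / 64 := by gcongr
      _ ≤ π ^ 2 / 2 * G / 64 := by gcongr
      _ ≤ 3.15 ^ 2 / 2 * G / 64 := by gcongr
      _ ≤ G / 10 := by linarith
  have hηcos : η * Real.cos β ≤ G / 5 := by
    have hcos : 0 ≤ Real.cos β := Real.cos_nonneg_of_mem_Icc ⟨by linarith, hβ⟩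
    calc η * Real.cos β ≤ (β - a) / 8 * Real.cos β := by gcongr; exact hη.2
      _ = π / 16 * (2 / π * (β - a) * Real.cos β) := by field_simp; ring
      _ ≤ π / 16 * G := by gcongr; exact sub_mul_cos_le_sin_sub_sin ha haβ.le hβ
      _ ≤ 3.15 / 16 * G := by gcongr
      _ ≤ G / 5 := by linarith
  have hN : N ≤ ρ + 9 / 40 * G := by
    refine le_of_sq_le_sq ?_ (by positivity)
    nlinarith [mul_nonneg (sub_nonneg.2 hρ) hGpos.le]
  have hsin : 0 ≤ Real.sin a := Real.sin_nonneg_of_nonneg_of_le_pi ha (by linarith)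
  calc Real.sin a * N ≤ Real.sin a * (ρ + 9 / 40 * G) := by gcongr
    _ ≤ Real.sin a * ρ + 1 * (9 / 40 * G) := by
      rw [mul_add]; gcongr; exact Real.sin_le_one a
    _ < ρ * Real.sin a + 1 / 2 * G - G / 5 := by linarith
    _ ≤ ρ * Real.sin a + ρ * G - η * Real.cos β := by gcongr
    _ = ρ * Real.sin β - η * Real.cos β := by rw [hG]; ring

end LensEstimate

section BeltAndLens

open scoped Pointwise

variable {E : Type*} [NormedAddCommGroup E] [InnerProductSpace ℝ E] {e x₀ : E} {t : ℝ}

/-- The spherical zone of height `t` on both sides of the equator orthogonal to `e`. For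
`t = sin a` it consists of the unit normals of the hyperplanes that meet the cap `B(e, a)`. -/
def belt (e : E) (t : ℝ) : Set E := Metric.sphere 0 1 ∩ {x | |⟪x, e⟫| ≤ t}

/-- The points of the sphere above the zone `belt e t` that lie in the closed hemisphere opposite
to `x₀`. For `t = sin a` their orthogonal hyperplanes miss the cap `B(e, a)` and separate it
from `x₀`. -/
def lens (e x₀ : E) (t : ℝ) : Set E := Metric.sphere 0 1 ∩ {x | t < ⟪x, e⟫ ∧ ⟪x, x₀⟫ ≤ 0}

lemma disjoint_belt_lens : Disjoint (belt e t) (lens e x₀ t) :=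
  Set.disjoint_left.2 fun _ hx hx' => ((le_abs_self _).trans hx.2).not_gt hx'.2.1

lemma neg_belt : -belt e t = belt e t := by
  ext x
  simp [belt]

lemma disjoint_lens_neg_lens (ht : 0 ≤ t) : Disjoint (lens e x₀ t) (-lens e x₀ t) :=
  Set.disjoint_left.2 fun x hx hx' => by
    have h1 : t < ⟪x, e⟫ := hx.2.1
    have h2 : t < ⟪-x, e⟫ := hx'.2.1
    rw [inner_neg_left] at h2
    linarith

lemma neg_hittingSet (K : Set E) : -hittingSet K = hittingSet K := by
  ext x
  simp [hittingSet]

lemma lens_subset_hittingSet {C : ProperCone ℝ E} (he : e ∈ C) (hx₀ : x₀ ∈ C) (hx₀0 : x₀ ≠ 0)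
    (hex₀ : 0 ≤ ⟪e, x₀⟫) (ht : 0 ≤ t) :
    lens e x₀ t ⊆ hittingSet ((C : Set E) ∩ Metric.sphere 0 1) := by
  rintro x ⟨-, hxe, hxx₀⟩
  have hxe0 : 0 < ⟪x, e⟫ := ht.trans_lt hxe
  set z := -⟪x, x₀⟫ • e + ⟪x, e⟫ • x₀ with hz
  have hzC : z ∈ C := C.add_mem (C.smul_mem he (neg_nonneg.2 hxx₀)) (C.smul_mem hx₀ hxe0.le)
  have hxz : ⟪x, z⟫ = 0 := by
    rw [hz, inner_add_right, real_inner_smul_right, real_inner_smul_right]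
    ring
  have hzx₀ : 0 < ⟪z, x₀⟫ := by
    rw [hz, inner_add_left, real_inner_smul_left, real_inner_smul_left]
    exact add_pos_of_nonneg_of_pos (mul_nonneg (neg_nonneg.2 hxx₀) hex₀)
      (mul_pos hxe0 (real_inner_self_pos.2 hx₀0))
  have hz0 : z ≠ 0 := by
    rintro h
    simp [h] at hzx₀
  exact ⟨‖z‖⁻¹ • z, ⟨C.smul_mem hzC (by positivity),
    mem_sphere_zero_iff_norm.2 (norm_smul_inv_norm hz0)⟩,
    by rw [real_inner_smul_right, hxz, mul_zero]⟩

lemma hittingSet_cap_inter_uSphere {d : ℕ} {e : Esp d} (he : ‖e‖ = 1) {a : ℝ}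
    (ha : a ∈ Set.Ico 0 (π / 2)) :
    hittingSet (cap e a) ∩ uSphere d = belt e (Real.sin a) := by
  have haπ : a ∈ Set.Icc 0 π := ⟨ha.1, by linarith [ha.2, Real.pi_pos]⟩
  have hcos : 0 < Real.cos a := Real.cos_pos_of_mem_Ioo ⟨by linarith [ha.1, Real.pi_pos], ha.2⟩
  have hsin : 0 ≤ Real.sin a := Real.sin_nonneg_of_mem_Icc haπ
  have hsq := Real.sin_sq_add_cos_sq a
  ext x
  constructor
  · rintro ⟨⟨y, hy, hxy⟩, hx⟩
    obtain ⟨hy1, hye⟩ := (mem_cap_iff_cos_le_inner he haπ).1 hy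
    have hbessel := inner_sq_add_inner_sq_le (z := e) (mem_uSphere_iff_norm_eq_one.1 hx) hy1 hxy
    have hye2 : Real.cos a ^ 2 ≤ ⟪y, e⟫ ^ 2 := by gcongr
    rw [he] at hbessel
    exact ⟨hx, abs_le_of_sq_le_sq (by linarith) hsin⟩
  · rintro ⟨hx, hxe⟩
    have hxe2 : ⟪x, e⟫ ^ 2 ≤ Real.sin a ^ 2 := sq_le_sq' (abs_le.1 hxe).1 (abs_le.1 hxe).2
    obtain ⟨u, hu, hxu, hdecomp⟩ := exists_norm_eq_one_and_eq_inner_smul_add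
      (mem_sphere_zero_iff_norm.1 hx) he (by linarith [pow_pos hcos 2])
    refine ⟨⟨u, (mem_cap_iff_cos_le_inner he haπ).2 ⟨hu, ?_⟩, hxu⟩, hx⟩
    have hue : ⟪u, e⟫ = √(1 - ⟪x, e⟫ ^ 2) := by
      rw [real_inner_comm]
      nth_rw 1 [hdecomp]
      rw [inner_add_left, real_inner_smul_left, real_inner_smul_left, hxu,
        real_inner_self_eq_norm_sq, hu]
      ring
    rw [hue]
    exact Real.le_sqrt_of_sq_le (by linarith)

lemma Ioo_smul_subset_ball {A : Set E} (hA : A ⊆ Metric.sphere 0 1) :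
    Set.Ioo (0 : ℝ) 1 • A ⊆ Metric.ball 0 1 := by
  rintro _ ⟨r, ⟨hr0, hr1⟩, x, hx, rfl⟩
  simpa [norm_smul, mem_sphere_zero_iff_norm.1 (hA hx), abs_of_pos hr0] using hr1

variable [MeasurableSpace E] [BorelSpace E]

lemma measurableSet_belt : MeasurableSet (belt e t) :=
  (Metric.isClosed_sphere.inter
    (isClosed_le (f := fun x => |⟪x, e⟫|) (by fun_prop) continuous_const)).measurableSet

lemma measurableSet_lens : MeasurableSet (lens e x₀ t) := by
  have hopen : IsOpen {x : E | t < ⟪x, e⟫} := isOpen_lt continuous_const (by fun_prop)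
  have hclosed : IsClosed {x : E | ⟪x, x₀⟫ ≤ 0} := isClosed_le (by fun_prop) continuous_const
  exact Metric.isClosed_sphere.measurableSet.inter (hopen.measurableSet.inter hclosed.measurableSet)

variable [FiniteDimensional ℝ E]

lemma surfaceMeasure_real_neg (A : Set E) :
    (surfaceMeasure E).real (-A) = (surfaceMeasure E).real A := by
  let T : E ≃ₗᵢ[ℝ] E := LinearIsometryEquiv.neg ℝ
  exact congrArg ENNReal.toReal
    ((measurePreserving_surfaceMeasure T).measure_preimage_equiv (f := T.toMeasurableEquiv) A)

lemma belt_add_two_mul_lens_le_hittingSet {K : Set E} (ht : 0 ≤ t)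
    (hbelt : belt e t ⊆ hittingSet K) (hlens : lens e x₀ t ⊆ hittingSet K) :
    (surfaceMeasure E).real (belt e t) + 2 * (surfaceMeasure E).real (lens e x₀ t) ≤
      (surfaceMeasure E).real (hittingSet K) := by
  have hneg : -lens e x₀ t ⊆ hittingSet K := by
    rw [← neg_hittingSet]
    exact Set.neg_subset_neg.2 hlens
  have hdisj : Disjoint (belt e t) (lens e x₀ t ∪ -lens e x₀ t) := by
    refine Set.disjoint_union_right.2 ⟨disjoint_belt_lens, ?_⟩
    rw [← neg_belt]
    exact disjoint_belt_lens.preimage Neg.neg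
  have hmeas := measurableSet_lens (e := e) (x₀ := x₀) (t := t)
  calc (surfaceMeasure E).real (belt e t) + 2 * (surfaceMeasure E).real (lens e x₀ t)
      = (surfaceMeasure E).real (belt e t ∪ (lens e x₀ t ∪ -lens e x₀ t)) := by
        rw [measureReal_union hdisj (hmeas.union hmeas.neg),
          measureReal_union (disjoint_lens_neg_lens ht) hmeas.neg, surfaceMeasure_real_neg, two_mul]
    _ ≤ _ := measureReal_mono (Set.union_subset hbelt (Set.union_subset hlens hneg))

lemma surfaceMeasure_real_belt_le {n : ℕ} (hn : Module.finrank ℝ E = n + 2) (he : ‖e‖ = 1)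
    (ht : 0 ≤ t) :
    (surfaceMeasure E).real (belt e t) ≤ ↑(n + 2) * (4 * t * kappaVol n) := by
  obtain ⟨q, hq, heq⟩ := exists_norm_eq_one_and_inner_eq_zero hn he
  have hbox := volume_real_box hn he hq heq (s₀ := -t) (s₁ := t) (by linarith)
    (neg_le_self zero_le_one) zero_le_one
  rw [one_pow n, one_mul, show (t - -t) * (1 - -1) = 4 * t by ring] at hbox
  rw [surfaceMeasure_real_of_subset measurableSet_belt Set.inter_subset_left, hn, ← hbox]
  gcongr
  · refine ((Metric.isBounded_closedBall (x := 0) (r := t + 2)).subset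
      fun x hx => ?_).measure_lt_top.ne
    obtain ⟨hex, hqx, hrest⟩ := hx
    rw [mem_closedBall_zero_iff]
    refine le_of_sq_le_sq ?_ (by linarith)
    linarith [sq_le_sq' hex.1 hex.2, sq_le_sq' hqx.1 hqx.2]
  rintro _ ⟨r, ⟨hr0, hr1⟩, x, ⟨hx, hxe⟩, rfl⟩
  rw [mem_sphere_zero_iff_norm] at hx
  have hrx : ‖r • x‖ = r := by rw [norm_smul, hx, mul_one, Real.norm_of_nonneg hr0.le]
  have hex : |⟪e, r • x⟫| ≤ t := by
    rw [real_inner_smul_right, abs_mul, abs_of_pos hr0, real_inner_comm]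
    exact (mul_le_of_le_one_left (abs_nonneg _) hr1.le).trans hxe
  have hqx : |⟪q, r • x⟫| ≤ 1 := by
    have hcs := abs_real_inner_le_norm q (r • x)
    rw [hq, hrx, one_mul] at hcs
    exact hcs.trans hr1.le
  refine ⟨abs_le.1 hex, abs_le.1 hqx, ?_⟩
  rw [hrx]
  nlinarith [sq_nonneg ⟪e, r • x⟫, sq_nonneg ⟪q, r • x⟫]

lemma le_surfaceMeasure_real_lens {n : ℕ} (hn : Module.finrank ℝ E = n + 2) (he : ‖e‖ = 1)
    (hx₀ : ‖x₀‖ = 1) {a β : ℝ} (ha : 0 ≤ a) (haβ : a < β) (hβ : β ≤ π / 2)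
    (hcos : ⟪x₀, e⟫ = Real.cos β) :
    ↑(n + 2) * ((β - a) / 20 * (√((π / 2 - a) * (β - a)) / (2 * π)) ^ n * kappaVol n) ≤
      (surfaceMeasure E).real (lens e x₀ (Real.sin a)) := by
  have hsinβ : 0 < Real.sin β := Real.sin_pos_of_pos_of_lt_pi (by linarith) (by linarith)
  have hsq : 1 - ⟪x₀, e⟫ ^ 2 = Real.sin β ^ 2 := by rw [hcos, Real.sin_sq]
  obtain ⟨p, hp, hx₀p, hdecomp⟩ := exists_norm_eq_one_and_eq_inner_smul_add hx₀ he
    (by linarith [pow_pos hsinβ 2])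
  rw [hsq, Real.sqrt_sq hsinβ.le, hcos] at hdecomp
  have hbox := volume_real_box hn hp (q := -x₀) (by simpa using hx₀)
    (by rw [inner_neg_right, real_inner_comm, hx₀p, neg_zero])
    (s₀ := 1 / 2) (s₁ := 9 / 10) (by norm_num) (t₀ := 0) (t₁ := (β - a) / 8) (by linarith)
    (r := √((π / 2 - a) * (β - a)) / (2 * π)) (by positivity)
  rw [show (9 / 10 - 1 / 2) * ((β - a) / 8 - 0) = (β - a) / 20 by ring, ← mul_assoc] at hbox
  rw [surfaceMeasure_real_of_subset measurableSet_lens Set.inter_subset_left, hn, ← hbox]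
  gcongr
  · exact (Metric.isBounded_ball.subset
      (Ioo_smul_subset_ball Set.inter_subset_left)).measure_lt_top.ne
  rintro x ⟨hρ, hη, hx⟩
  have hN := lt_one_of_sq_sub_sq_sub_sq_le ha haβ hβ hρ hη (norm_nonneg x) hx
  have hlt := sin_mul_lt_of_sq_sub_sq_sub_sq_le ha haβ hβ hρ.1 hη hx
  have hxe : ⟪x, e⟫ = ⟪p, x⟫ * Real.sin β - ⟪-x₀, x⟫ * Real.cos β := by
    rw [hdecomp, inner_add_right, real_inner_smul_right, real_inner_smul_right, inner_neg_left,
      real_inner_comm p, real_inner_comm x₀]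
    ring
  rw [← hxe] at hlt
  have hx0 : 0 < ‖x‖ := norm_pos_iff.2 fun h => by simp [h] at hlt
  refine ⟨‖x‖, ⟨hx0, hN⟩, ‖x‖⁻¹ • x,
    ⟨mem_sphere_zero_iff_norm.2 (norm_smul_inv_norm (norm_pos_iff.1 hx0)), ?_, ?_⟩,
    smul_inv_smul₀ hx0.ne' x⟩
  · rwa [real_inner_smul_left, inv_mul_eq_div, lt_div_iff₀ hx0]
  · have hη0 := hη.1
    rw [inner_neg_left, real_inner_comm] at hη0
    rw [real_inner_smul_left]
    exact mul_nonpos_of_nonneg_of_nonpos (by positivity) (by linarith)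

end BeltAndLens

section StabilityConstant

variable {a : ℝ}

lemma five_mul_three_div_pi_pow_mul_le (ha : 0 < a) (ha2 : a < π / 2) :
    5 * (3 / π ^ 4 * a * (π / 2 - a)) ≤ √(π / 2 - a) / (2 * π) := by
  have hq : 0 < π / 2 - a := sub_pos.2 ha2
  set u := √(π / 2 - a)
  have hu2 : u ^ 2 = π / 2 - a := Real.sq_sqrt hq.le
  have hu : 0 ≤ u := Real.sqrt_nonneg _
  have hau : a * u ≤ 1 := by
    refine le_of_sq_le_sq ?_ zero_le_one
    rw [mul_pow, hu2]
    nlinarith [sq_nonneg (a - 1), mul_nonneg ha.le (sq_nonneg (a - 1)), Real.pi_lt_d2]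
  have hpi : (30 : ℝ) ≤ π ^ 3 :=
    calc (30 : ℝ) ≤ 3.14 ^ 3 := by norm_num
      _ ≤ π ^ 3 := by gcongr; exact Real.pi_gt_d2.le
  have hratio : 30 * (a * u) / π ^ 3 ≤ 1 := by
    rw [div_le_one (by positivity)]
    linarith
  rw [← hu2, le_div_iff₀ (by positivity)]
  calc 5 * (3 / π ^ 4 * a * u ^ 2) * (2 * π) = 30 * (a * u) / π ^ 3 * u := by
        field_simp
        ring
    _ ≤ u := mul_le_of_le_one_left hu hratio

lemma rpow_natCast_add_one_div_two {δ : ℝ} (hδ : 0 < δ) (m : ℕ) :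
    δ ^ ((((m + 2 : ℕ) : ℝ) + 1) / 2) = δ * √δ ^ (m + 1) := by
  rw [Real.sqrt_eq_rpow, ← Real.rpow_natCast, ← Real.rpow_mul hδ.le, ← Real.rpow_one_add' hδ.le]
  · congr 1
    push_cast
    ring
  · positivity

/-- The constant `c∘(a, d)` of the stability estimate. -/
def stabilityConst (a : ℝ) (d : ℕ) : ℝ :=
  1 / 8 * (3 / π ^ 4) ^ (d - 1) * a ^ (d - 2) * (π / 2 - a) ^ (d - 1)

lemma stabilityConst_nonneg (ha : 0 ≤ a) (ha2 : a ≤ π / 2) (d : ℕ) : 0 ≤ stabilityConst a d := by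
  unfold stabilityConst
  positivity

lemma stabilityConst_mul_rpow_mul_sin_le (ha : 0 < a) (ha2 : a < π / 2) {δ : ℝ} (hδ : 0 < δ)
    (m : ℕ) :
    stabilityConst a (m + 2) * δ ^ ((((m + 2 : ℕ) : ℝ) + 1) / 2) * (4 * Real.sin a) ≤
      2 * (δ / 20 * (√((π / 2 - a) * δ) / (2 * π)) ^ (m + 1)) := by
  have hq : 0 < π / 2 - a := sub_pos.2 ha2
  have hbase := five_mul_three_div_pi_pow_mul_le ha ha2
  have hpow : 5 * (3 / π ^ 4 * a * (π / 2 - a)) ^ (m + 1) ≤ (√(π / 2 - a) / (2 * π)) ^ (m + 1) :=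
    calc 5 * (3 / π ^ 4 * a * (π / 2 - a)) ^ (m + 1)
        ≤ 5 ^ (m + 1) * (3 / π ^ 4 * a * (π / 2 - a)) ^ (m + 1) := by
          gcongr
          exact le_self_pow₀ (by norm_num) m.succ_ne_zero
      _ = (5 * (3 / π ^ 4 * a * (π / 2 - a))) ^ (m + 1) := (mul_pow _ _ _).symm
      _ ≤ _ := by gcongr
  rw [rpow_natCast_add_one_div_two hδ, Real.sqrt_mul hq.le]
  calc stabilityConst a (m + 2) * (δ * √δ ^ (m + 1)) * (4 * Real.sin a)
      ≤ stabilityConst a (m + 2) * (δ * √δ ^ (m + 1)) * (4 * a) := by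
        have hc := stabilityConst_nonneg ha.le ha2.le (m + 2)
        gcongr
        exact Real.sin_le ha.le
    _ = δ * √δ ^ (m + 1) / 10 * (5 * (3 / π ^ 4 * a * (π / 2 - a)) ^ (m + 1)) := by
        rw [stabilityConst, Nat.add_sub_cancel, show m + 2 - 1 = m + 1 from rfl, mul_pow, mul_pow,
          pow_succ a]
        ring
    _ ≤ δ * √δ ^ (m + 1) / 10 * (√(π / 2 - a) / (2 * π)) ^ (m + 1) := by gcongr
    _ = _ := by ring

end StabilityConstant

section Stability

lemma stabilityConst_mul_rpow_mul_belt_le {E : Type*} [NormedAddCommGroup E]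
    [InnerProductSpace ℝ E] [FiniteDimensional ℝ E] [MeasurableSpace E] [BorelSpace E] {m : ℕ}
    (hm : Module.finrank ℝ E = m + 3) {e x₀ : E} (he : ‖e‖ = 1) (hx₀ : ‖x₀‖ = 1) {a β : ℝ}
    (ha : 0 < a) (haβ : a < β) (hβ : β ≤ π / 2) (hcos : ⟪x₀, e⟫ = Real.cos β) :
    stabilityConst a (m + 2) * (β - a) ^ ((((m + 2 : ℕ) : ℝ) + 1) / 2) *
        (surfaceMeasure E).real (belt e (Real.sin a)) ≤
      2 * (surfaceMeasure E).real (lens e x₀ (Real.sin a)) := by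
  have hδ : 0 < β - a := sub_pos.2 haβ
  have hκ : 0 ≤ kappaVol (m + 1) := ENNReal.toReal_nonneg
  have hconst := stabilityConst_mul_rpow_mul_sin_le ha (haβ.trans_le hβ) hδ m
  have hsin : 0 ≤ Real.sin a := Real.sin_nonneg_of_nonneg_of_le_pi ha.le (by linarith)
  have hbelt := surfaceMeasure_real_belt_le hm he hsin
  have hlens := le_surfaceMeasure_real_lens hm he hx₀ ha.le haβ hβ hcos
  set k := stabilityConst a (m + 2) * (β - a) ^ ((((m + 2 : ℕ) : ℝ) + 1) / 2)
  set h := √((π / 2 - a) * (β - a)) / (2 * π)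
  have hk : 0 ≤ k := mul_nonneg (stabilityConst_nonneg ha.le (haβ.le.trans hβ) _)
    (Real.rpow_nonneg hδ.le _)
  calc k * (surfaceMeasure E).real (belt e (Real.sin a))
      ≤ k * (↑(m + 1 + 2) * (4 * Real.sin a * kappaVol (m + 1))) := by gcongr
    _ = ↑(m + 1 + 2) * kappaVol (m + 1) * (k * (4 * Real.sin a)) := by ring
    _ ≤ ↑(m + 1 + 2) * kappaVol (m + 1) * (2 * ((β - a) / 20 * h ^ (m + 1))) := by gcongr
    _ = 2 * (↑(m + 1 + 2) * ((β - a) / 20 * h ^ (m + 1) * kappaVol (m + 1))) := by ring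
    _ ≤ _ := by gcongr

variable {d : ℕ} {a : ℝ} {e : Esp d}

lemma surfaceMeasure_real_hittingSet_cap (he : ‖e‖ = 1) (ha : a ∈ Set.Ico 0 (π / 2)) :
    (surfaceMeasure (Esp d)).real (hittingSet (cap e a)) =
      (surfaceMeasure (Esp d)).real (belt e (Real.sin a)) := by
  rw [← hittingSet_cap_inter_uSphere he ha, Measure.real, Measure.real, Set.inter_comm,
    uSphere, Measure.measure_inter_eq_of_ae ae_surfaceMeasure_mem_sphere]

lemma belt_subset_hittingSet {K : Set (Esp d)} (he : ‖e‖ = 1) (ha : a ∈ Set.Ico 0 (π / 2))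
    (hK : cap e a ⊆ K) : belt e (Real.sin a) ⊆ hittingSet K := by
  rw [← hittingSet_cap_inter_uSphere he ha]
  exact fun x hx => hx.1.imp fun y hy => ⟨hK hy.1, hy.2⟩

lemma U1_nonneg (K : Set (Esp d)) : 0 ≤ U1 d K := by
  unfold U1 omegaTot
  positivity

theorem mul_U1_cap_le_U1_of_cap_subset {C : ProperCone ℝ (Esp d)} {x₀ : Esp d} (hd : 2 ≤ d)
    (ha : 0 < a) (he : ‖e‖ = 1) (hcap : cap e a ⊆ C ∩ uSphere d)
    (hx₀ : x₀ ∈ (C : Set (Esp d)) ∩ uSphere d) (hax₀ : a < geo x₀ e) (hx₀e : geo x₀ e ≤ π / 2) :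
    (1 + stabilityConst a d * (geo x₀ e - a) ^ (((d : ℝ) + 1) / 2)) * U1 d (cap e a) ≤
      U1 d (C ∩ uSphere d) := by
  obtain ⟨m, rfl⟩ : ∃ m, d = m + 2 := ⟨d - 2, by omega⟩
  have ha2 : a ∈ Set.Ico 0 (π / 2) := ⟨ha.le, hax₀.trans_le hx₀e⟩
  have hsin : 0 ≤ Real.sin a := Real.sin_nonneg_of_nonneg_of_le_pi ha.le (by linarith)
  have hx₀1 := mem_uSphere_iff_norm_eq_one.1 hx₀.2
  have hex₀ : 0 ≤ ⟪e, x₀⟫ := real_inner_comm e x₀ ▸ Real.arccos_le_pi_div_two.1 hx₀e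
  have heC : e ∈ C := (hcap ((mem_cap_iff_cos_le_inner he ⟨ha.le, by linarith⟩).2
    ⟨he, by simpa [he] using Real.cos_le_one a⟩)).1
  have hhit := belt_add_two_mul_lens_le_hittingSet hsin (belt_subset_hittingSet he ha2 hcap)
    (lens_subset_hittingSet heC hx₀.1 (norm_ne_zero_iff.1 (by simp [hx₀1])) hex₀ hsin)
  have hgain := stabilityConst_mul_rpow_mul_belt_le finrank_euclideanSpace_fin he hx₀1 ha hax₀
    hx₀e (cos_geo hx₀1 he).symm
  obtain ⟨c, hc, hU1⟩ := exists_U1_eq_mul_surfaceMeasure (m + 2)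
  rw [hU1, hU1, surfaceMeasure_real_hittingSet_cap he ha2, mul_left_comm, add_mul, one_mul]
  exact mul_le_mul_of_nonneg_left ((add_le_add_right hgain _).trans hhit) hc

theorem statement2_general (hd : 2 ≤ d) (ha : 0 < a) {K : Set (Esp d)} (hK : IsSphConvBody d K)
    {ε : ℝ} (hε : 0 < ε) (haK : a ≤ SigmaR d K) (hεK : ε ≤ thetaR d K) (he : e ∈ K)
    (hmax : rcent d K e = SigmaR d K) :
    (1 + stabilityConst a d * ε ^ (((d : ℝ) + 1) / 2)) * U1 d (cap e a) ≤ U1 d K := by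
  obtain ⟨C, hC, rfl⟩ := hK.exists_properCone ⟨e, he⟩
  have har : a ≤ rcent d (C ∩ uSphere d) e := haK.trans_eq hmax.symm
  obtain ⟨x₀, hx₀, hle, hx₀e⟩ := exists_rcent_add_thetaR_le_geo hC he (ha.trans_le har) hmax
  have hδ : ε ≤ geo x₀ e - a := by linarith
  have ha2 : a < π / 2 := by linarith
  have he1 := mem_uSphere_iff_norm_eq_one.1 he.2
  have hc := stabilityConst_nonneg ha.le ha2.le d
  calc (1 + stabilityConst a d * ε ^ (((d : ℝ) + 1) / 2)) * U1 d (cap e a)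
      ≤ (1 + stabilityConst a d * (geo x₀ e - a) ^ (((d : ℝ) + 1) / 2)) * U1 d (cap e a) := by
        gcongr
        exact U1_nonneg _
    _ ≤ U1 d (C ∩ uSphere d) := mul_U1_cap_le_U1_of_cap_subset hd ha he1
        (cap_subset_of_le_rcent he1 ⟨ha, ha2⟩ har) hx₀ (by linarith) hx₀e

end Stability

/-- Theorem 4.4. Stability for the inradius: there is a constant
`c∘(a,d)` bounded below explicitly such that for every `K ∈ 𝒦̄_s^d` with
`Σ_r(K) ≥ a` and `ϑ_r(K) ≥ ε`, and every incentre `e`,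
`U₁(K) ≥ (1 + c∘(a,d) ε^{(d+1)/2}) U₁(B(e,a))`. -/
theorem statement2 (d : ℕ) (hd : 2 ≤ d) (a : ℝ) (ha : 0 < a) :
    ∃ c : ℝ, (1 / 8) * (3 / π ^ 4) ^ (d - 1) * a ^ (d - 2) * (π / 2 - a) ^ (d - 1) ≤ c ∧
      ∀ (K : Set (Esp d)) (ε : ℝ) (e : Esp d), IsSphConvBody d K →
        0 < ε → ε ≤ 1 → a ≤ SigmaR d K → ε ≤ thetaR d K →
        e ∈ K → rcent d K e = SigmaR d K →
        U1 d K ≥ (1 + c * ε ^ (((d : ℝ) + 1) / 2)) * U1 d (cap e a) :=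
  ⟨stabilityConst a d, le_rfl, fun _ _ _ hK hε _ haK hεK he hmax =>
    statement2_general hd ha hK hε haK hεK he hmax⟩

end
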